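/- arXiv:1907.03584 — 5 statements merged into one kernel-verified Lean document; each statement's English description precedes it below -/
import Mathlib

section
/- Let H be a set and let A be a subalgebra of the ℂ-algebra of all complex-valued functions on H that separates the points of H, and assume that every nonzero ℂ-algebra homomorphism φ : A → ℂ is an evaluation, i.e., there exists x ∈ H with φ(v) = v(x) for all v ∈ A. If u ∈ A is a minimal idempotent, i.e., u ≠ 0, u·u = u, and for every v ∈ A there exists c ∈ ℂ with v·u = c•u, then there exists x ∈ H such that u is the characteristic function 1_{x} of {x}. -/
open Classical in
set_option synthInstance.maxHeartbeats 1000000 in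
set_option maxHeartbeats 1000000 in

/-- If `A` is a point-separating subalgebra of the algebra of complex-valued functions on `H`
such that every nonzero multiplicative linear functional on `A` is an evaluation at a point
of `H`, then every minimal idempotent of `A` is the characteristic function of a singleton. -/
theorem stmt2 {H : Type*} (A : Subalgebra ℂ (H → ℂ))
    (hsep : ∀ s t : H, s ≠ t → ∃ v ∈ A, v s ≠ v t)
    (hchar : ∀ φ : A →ₗ[ℂ] ℂ, (∀ a b : A, φ (a * b) = φ a * φ b) → φ ≠ 0 →
      ∃ x : H, ∀ v : A, φ v = (v : H → ℂ) x)
    (u : H → ℂ) (hu : u ∈ A) (hne : u ≠ 0) (hid : u * u = u)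
    (hmin : ∀ v ∈ A, ∃ c : ℂ, v * u = c • u) :
    ∃ x : H, u = fun t => if t = x then 1 else 0 := by
  -- An idempotent function takes only the values 0 and 1.
  have h01 : ∀ t, u t = 0 ∨ u t = 1 := fun t => by
    have h : u t * u t = u t := congrFun hid t
    by_cases h0 : u t = 0
    · exact Or.inl h0
    · exact Or.inr (mul_left_cancel₀ h0 (by rw [h, mul_one]))
  obtain ⟨x, hx⟩ := Function.ne_iff.mp hne
  have hx1 : u x = 1 := (h01 x).resolve_left hx
  refine ⟨x, funext fun t => ?_⟩
  by_cases htx : t = x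
  · simp [htx, hx1]
  · rw [if_neg htx]
    -- By minimality every element of `A` is constant on the support of `u`, so separation of
    -- points forces the support to be `{x}`.
    refine (h01 t).resolve_right fun ht1 => ?_
    obtain ⟨v, hv, hvne⟩ := hsep t x htx
    obtain ⟨c, hc⟩ := hmin v hv
    have h1 := congrFun hc t
    have h2 := congrFun hc x
    simp only [Pi.mul_apply, Pi.smul_apply, smul_eq_mul, ht1, hx1, mul_one] at h1 h2
    exact hvne (h1.trans h2.symm)
end

section
/- Let X be a Banach space over ℂ and let T : X → X be a bounded linear operator that is weakly compact. Let C be a norm-closed linear subspace of the dual X* and let D be a subset of X* whose closure in the weak* topology is all of X*. If the adjoint T* maps every element of D into C, then T*(Φ) ∈ C for every Φ ∈ X*. -/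
/-!
If `Φ ∘ T ∉ C`, Hahn–Banach gives a bidual functional `Λ` of norm at most one that vanishes on `C`
but not at `Φ ∘ T`. Weak compactness of `T` forces `T** Λ` to be evaluation at some point `y : X`
(part of Gantmacher's theorem, `exists_forall_apply_comp_eq`). Hence every `φ ∈ D`
satisfies `φ y = Λ (φ ∘ T) = 0`; by weak-star density of `D` all functionals vanish at `y`, in
particular `Λ (Φ ∘ T) = Φ y = 0`, a contradiction.
-/

open Metric NormedSpace

/-- The norm of a functional is bounded by any upper bound of its real part on the unit ball. -/
lemma norm_le_of_re_le {X : Type*} [NormedAddCommGroup X] [NormedSpace ℂ X]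
    (ψ : X →L[ℂ] ℂ) (u : ℝ) (h : ∀ x ∈ closedBall (0 : X) 1, (ψ x).re ≤ u) : ‖ψ‖ ≤ u := by
  have hu : 0 ≤ u := by simpa using h 0 (by simp)
  refine ContinuousLinearMap.opNorm_le_of_unit_norm hu fun x hx => ?_
  obtain ⟨c, hc, hcx⟩ := RCLike.exists_norm_eq_mul_self (ψ x)
  have := h (c • x) (by simp [norm_smul, hc, hx])
  rw [map_smul, smul_eq_mul, ← hcx] at this
  simpa using this

/-- Hahn–Banach separation of a point from a closed convex set in the weak topology induced by a
pairing `B`, where the separating continuous functional is given by a vector `φ : F`. -/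
lemma exists_weakBilin_separation {E F : Type*} [AddCommGroup E] [Module ℂ E] [AddCommGroup F]
    [Module ℂ F] [Module ℝ E] [IsScalarTower ℝ ℂ E] (B : E →ₗ[ℂ] F →ₗ[ℂ] ℂ)
    (A : Set E) (hA : Convex ℝ A) (hAc : IsClosed (show Set (WeakBilin B) from A))
    (x : E) (hx : x ∉ A) :
    ∃ (φ : F) (u : ℝ), (∀ a ∈ A, (B a φ).re < u) ∧ u < (B x φ).re := by
  obtain ⟨f, u, hfA, hfx⟩ :=
    RCLike.geometric_hahn_banach_closed_point (𝕜 := ℂ) (E := WeakBilin B) (s := A) hA hAc hx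
  obtain ⟨φ, rfl⟩ := LinearMap.dualEmbedding_surjective B f
  exact ⟨φ, u, hfA, hfx⟩

/-- If `T` is weakly compact then `T**` maps the unit ball of the bidual into (the canonical image
of) `X`. Otherwise some `T** Λ` lies outside the weak-star compact convex image of the weak closure
of `T` of the unit ball, so it is strictly separated from it by evaluation at some `φ`; but the
supremum of `Re φ` over `T` of the ball is `‖φ ∘ T‖`, which bounds `Re Λ (φ ∘ T)`. -/
lemma exists_forall_apply_comp_eq {X : Type*} [NormedAddCommGroup X] [NormedSpace ℂ X]
    (T : X →L[ℂ] X)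
    (hT : IsCompact (closure (toWeakSpace ℂ X '' (T '' closedBall (0 : X) 1))))
    (L : (X →L[ℂ] ℂ) →L[ℂ] ℂ) (hL : ‖L‖ ≤ 1) :
    ∃ y : X, ∀ φ : X →L[ℂ] ℂ, L (φ.comp T) = φ y := by
  set S : Set X := T '' closedBall (0 : X) 1 with hS
  have hSconv : Convex ℝ S :=
    (convex_closedBall (0 : X) 1).linear_image (T.restrictScalars ℝ).toLinearMap
  rw [← hSconv.toWeakSpace_closure ℂ] at hT
  let P : (X →L[ℂ] ℂ) →L[ℂ] ℂ := L.comp (ContinuousLinearMap.precomp ℂ T)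
  let J : X →L[ℂ] (X →L[ℂ] ℂ) →L[ℂ] ℂ := inclusionInDoubleDual ℂ X
  let A : Set ((X →L[ℂ] ℂ) →L[ℂ] ℂ) := J '' closure S
  have hA : IsCompact (show Set (WeakDual ℂ (X →L[ℂ] ℂ)) from A) := by
    have h := hT.image (inclusionInDoubleDualWeak ℂ X).continuous
    rw [Set.image_image] at h
    exact h
  have hAclosed :
      IsClosed (show Set (WeakBilin (topDualPairing ℂ (X →L[ℂ] ℂ))) from A) := hA.isClosed
  have hAconv : Convex ℝ A :=
    hSconv.closure.linear_image (J.restrictScalars ℝ).toLinearMap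
  by_cases hP : P ∈ A
  · obtain ⟨y, -, hy⟩ := hP
    exact ⟨y, fun φ => (DFunLike.congr_fun hy φ).symm⟩
  · exfalso
    obtain ⟨φ, u, hfA, hfP⟩ :=
      exists_weakBilin_separation (topDualPairing ℂ (X →L[ℂ] ℂ)) A hAconv hAclosed P hP
    have h1 : ‖φ.comp T‖ ≤ u := norm_le_of_re_le _ _ fun x hx =>
      (hfA (J (T x)) ⟨T x, subset_closure ⟨x, hx, rfl⟩, rfl⟩).le
    have h2 : u < (L (φ.comp T)).re := hfP
    have h3 : (L (φ.comp T)).re ≤ ‖φ.comp T‖ :=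
      (Complex.re_le_norm _).trans <| by
        simpa using L.le_of_opNorm_le hL (φ.comp T)
    linarith


open Metric in

/-- If `T` is a weakly compact operator on a Banach space `X`, `C` is a norm-closed
subspace of the dual `X*`, `D ⊆ X*` is weak-star dense, and the adjoint of `T` maps `D`
into `C`, then the adjoint of `T` maps all of `X*` into `C`. -/
theorem stmt3 {X : Type*} [NormedAddCommGroup X] [NormedSpace ℂ X] [CompleteSpace X]
    (T : X →L[ℂ] X)
    (hT : IsCompact (closure (toWeakSpace ℂ X '' (T '' closedBall (0 : X) 1))))
    (C : Submodule ℂ (X →L[ℂ] ℂ)) (hC : IsClosed (C : Set (X →L[ℂ] ℂ)))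
    (D : Set (X →L[ℂ] ℂ))
    (hD : closure (show Set (WeakDual ℂ X) from D) = Set.univ)
    (hTD : ∀ φ ∈ D, φ.comp T ∈ C) :
    ∀ Φ : X →L[ℂ] ℂ, Φ.comp T ∈ C := by
  intro Φ
  by_contra hΦ
  have := hC
  have hne₀ : C.mkQ (Φ.comp T) ≠ 0 := by simpa using hΦ
  have hne : ‖C.mkQ (Φ.comp T)‖ ≠ 0 := by
    have := @norm_ne_zero_iff ((X →L[ℂ] ℂ) ⧸ C) 
      (Submodule.Quotient.normedAddCommGroup C).toNormedAddGroup (C.mkQ (Φ.comp T))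
    exact this.mpr hne₀
  -- a norming functional of the class of `Φ ∘ T` in the quotient by `C`
  obtain ⟨g, hg1, hg⟩ := exists_dual_vector ℂ (C.mkQ (Φ.comp T)) hne
  let L : (X →L[ℂ] ℂ) →L[ℂ] ℂ := g.comp C.mkQL
  have hLC : ∀ ψ ∈ C, L ψ = 0 := fun ψ hψ => by
    have : C.mkQ ψ = 0 := by simpa using hψ
    change g (C.mkQ ψ) = 0
    rw [this, map_zero]
  have hL1 : ‖L‖ ≤ 1 := by
    refine L.opNorm_le_bound zero_le_one fun ψ => ?_
    rw [one_mul]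
    calc ‖g (C.mkQ ψ)‖ ≤ 1 * ‖C.mkQ ψ‖ := g.le_of_opNorm_le hg1.le _
      _ ≤ ‖ψ‖ := by rw [one_mul]; exact Submodule.Quotient.norm_mk_le C ψ
  obtain ⟨y, hy⟩ := exists_forall_apply_comp_eq T hT L hL1
  have hclosed : IsClosed {φ : WeakDual ℂ X | φ y = 0} :=
    isClosed_eq (WeakDual.eval_continuous y) continuous_const
  have hsub : closure (show Set (WeakDual ℂ X) from D) ⊆ {φ : WeakDual ℂ X | φ y = 0} := by
    refine closure_minimal (fun φ hφ => ?_) hclosed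
    exact (hy φ).symm.trans (hLC _ (hTD φ hφ))
  have hΦy : Φ y = 0 := hsub (hD ▸ Set.mem_univ (StrongDual.toWeakDual Φ))
  have hLΦ : L (Φ.comp T) = ‖C.mkQ (Φ.comp T)‖ := hg
  rw [hy Φ, hΦy] at hLΦ
  exact hne (by exact_mod_cast hLΦ.symm)
end

section
/- Let A be a commutative Banach algebra over ℂ and let χ be a character of A. Let u ∈ A with χ(u) ≠ 0, and let ρ_u : A → A be the multiplication operator ρ_u(v) = v·u. Let C be a norm-closed linear subspace of A* and let D be a subset of A* whose closure in the weak* topology is all of A*. If ρ_u is weakly compact and the adjoint ρ_u* maps every element of D into C, then χ ∈ C. -/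
/-!
Suppose `Ψ ∈ A**` annihilates `C`. Weak compactness of `ρ_u` puts `ρ_u** Ψ` in the canonical image
of `A` (the easy half of Gantmacher's theorem, `exists_bidual_eq_eval`): there is `a : A` with
`Ψ (φ ∘ ρ_u) = φ a` for every `φ ∈ A*`. The functional `φ ↦ φ a` is weak-star continuous and
vanishes on the weak-star dense set `D`, hence everywhere. In particular
`0 = Ψ (χ ∘ ρ_u) = χ u * Ψ χ`, so `Ψ χ = 0`. Since `C` is norm closed, the Hahn-Banach theorem
(`mem_of_forall_dual_eq_zero`, proved in the quotient) yields `χ ∈ C`.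
-/

/-- The weak-star topology is induced from `V → ℂ` with the product topology by a real-linear
map. -/
theorem locallyConvexSpace_weakDual (V : Type*) [NormedAddCommGroup V] [NormedSpace ℂ V] :
    LocallyConvexSpace ℝ (WeakDual ℂ V) :=
  LocallyConvexSpace.induced (F := V → ℂ)
    { toFun := fun (Φ : WeakDual ℂ V) v => Φ v
      map_add' := fun _ _ => rfl
      map_smul' := fun _ _ => rfl }

/-- The dual of `V*` with its weak-star topology is `V`: this identifies the functional produced by
the separation theorem. -/
theorem exists_eq_eval_of_strongDual_weakDual {V : Type*} [NormedAddCommGroup V] [NormedSpace ℂ V]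
    (f : StrongDual ℂ (WeakDual ℂ V)) : ∃ v : V, ∀ Φ : WeakDual ℂ V, f Φ = Φ v := by
  obtain ⟨v, hv⟩ := LinearMap.dualEmbedding_surjective (topDualPairing ℂ V) f
  exact ⟨v, fun Φ => (DFunLike.congr_fun hv Φ).symm⟩

open Metric in
/-- The unit-ball form of the easy half of Gantmacher's theorem. If `T** Ψ` were outside the
weak-star compact convex canonical image of the closure of `T (ball)`, a weak-star continuous
functional on `F**`, that is, evaluation at some `φ ∈ F*`, would strictly separate them; but
`re (φ ∘ T) ≤ s` on the unit ball gives `‖φ ∘ T‖ ≤ s`, and then `re (Ψ (φ ∘ T)) ≤ s`. -/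
theorem exists_bidual_eq_eval_of_norm_le_one {E F : Type*} [NormedAddCommGroup E] [NormedSpace ℂ E]
    [NormedAddCommGroup F] [NormedSpace ℂ F] (T : E →L[ℂ] F)
    (hT : IsCompact (closure (toWeakSpace ℂ F '' (T '' closedBall (0 : E) 1))))
    (Ψ : StrongDual ℂ (StrongDual ℂ E)) (hΨ : ∀ ψ, ‖Ψ ψ‖ ≤ ‖ψ‖) :
    ∃ a : F, ∀ φ : StrongDual ℂ F, Ψ (φ.comp T) = φ a := by
  set S : Set F := T '' closedBall (0 : E) 1 with hS
  have hconv : Convex ℝ S :=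
    (convex_closedBall (0 : E) 1).linear_image (T.toLinearMap.restrictScalars ℝ)
  rw [← hconv.toWeakSpace_closure (𝕜 := ℂ)] at hT
  have : IsScalarTower ℝ ℂ (WeakDual ℂ (StrongDual ℂ F)) :=
    ⟨fun r c Φ => DFunLike.ext _ _ fun φ => smul_assoc r c (Φ φ)⟩
  have : LocallyConvexSpace ℝ (WeakDual ℂ (StrongDual ℂ F)) :=
    locallyConvexSpace_weakDual _
  let J := NormedSpace.inclusionInDoubleDualWeak ℂ F
  set K : Set (WeakDual ℂ (StrongDual ℂ F)) := J '' (toWeakSpace ℂ F '' closure S) with hK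
  have hKc : IsCompact K := hT.image J.continuous
  have hKconv : Convex ℝ K := by
    have h := hconv.closure.linear_image
      ((J.toLinearMap ∘ₗ (toWeakSpace ℂ F).toLinearMap).restrictScalars ℝ)
    rw [hK, Set.image_image]
    exact h
  let Θ : WeakDual ℂ (StrongDual ℂ F) :=
    StrongDual.toWeakDual (Ψ.comp ((ContinuousLinearMap.compL ℂ E F ℂ).flip T))
  have hΘ (φ : StrongDual ℂ F) : Θ φ = Ψ (φ.comp T) := rfl
  by_cases hmem : Θ ∈ K
  · obtain ⟨_, ⟨a, -, rfl⟩, ha⟩ := hmem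
    exact ⟨a, fun φ => by rw [← hΘ, ← ha]; rfl⟩
  exfalso
  obtain ⟨f, s, hfs, hs⟩ :=
    RCLike.geometric_hahn_banach_closed_point (𝕜 := ℂ) hKconv hKc.isClosed hmem
  obtain ⟨φ, hφ⟩ := exists_eq_eval_of_strongDual_weakDual f
  have hre (x : E) (hx : ‖x‖ ≤ 1) : (φ (T x)).re ≤ s := by
    have h := hfs (J (toWeakSpace ℂ F (T x)))
      ⟨_, ⟨T x, subset_closure ⟨x, by simpa using hx, rfl⟩, rfl⟩, rfl⟩
    rw [hφ] at h
    exact h.le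
  have hs' : s < (Ψ (φ.comp T)).re := by
    rw [hφ, hΘ] at hs
    exact hs
  have hs0 : 0 ≤ s := by simpa using hre 0 (by simp)
  have hnorm : ‖φ.comp T‖ ≤ s := by
    refine ContinuousLinearMap.opNorm_le_of_unit_norm hs0 fun x hx => ?_
    -- Rotate `x` by a unimodular scalar that makes `φ (T x)` real and nonnegative.
    obtain ⟨c, hc, hcx⟩ := RCLike.exists_norm_eq_mul_self (φ (T x))
    have h := hre (c • x) (by rw [norm_smul, hc, hx, one_mul])
    rw [map_smul, map_smul, smul_eq_mul, ← hcx] at h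
    exact h
  have h1 : ‖Ψ (φ.comp T)‖ ≤ s :=
    (hΨ _).trans hnorm
  exact absurd ((Complex.re_le_norm _).trans h1) (not_le.mpr hs')

open Metric in
/-- The easy half of Gantmacher's theorem: if `T : E → F` is weakly compact, then `T**` maps `E**`
into the canonical image of `F`. -/
theorem exists_bidual_eq_eval {E F : Type*} [NormedAddCommGroup E] [NormedSpace ℂ E]
    [NormedAddCommGroup F] [NormedSpace ℂ F] (T : E →L[ℂ] F)
    (hT : IsCompact (closure (toWeakSpace ℂ F '' (T '' closedBall (0 : E) 1))))
    (Ψ : StrongDual ℂ (StrongDual ℂ E)) :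
    ∃ a : F, ∀ φ : StrongDual ℂ F, Ψ (φ.comp T) = φ a := by
  have hr : 0 < ‖Ψ‖ + 1 := by positivity
  obtain ⟨a, ha⟩ := exists_bidual_eq_eval_of_norm_le_one T hT (((‖Ψ‖ + 1 : ℝ) : ℂ)⁻¹ • Ψ) fun ψ => by
    rw [smul_apply, norm_smul, norm_inv, Complex.norm_real,
      Real.norm_of_nonneg hr.le, inv_mul_le_iff₀ hr]
    exact Ψ.le_of_opNorm_le (by linarith) ψ
  refine ⟨((‖Ψ‖ + 1 : ℝ) : ℂ) • a, fun φ => ?_⟩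
  rw [map_smul, ← ha, smul_apply, smul_inv_smul₀ (by exact_mod_cast hr.ne')]

theorem mem_of_forall_dual_eq_zero {V : Type*} [NormedAddCommGroup V] [NormedSpace ℂ V]
    (C : Submodule ℂ V) (hC : IsClosed (C : Set V)) (x : V)
    (h : ∀ Ψ : StrongDual ℂ V, (∀ y ∈ C, Ψ y = 0) → Ψ x = 0) : x ∈ C := by
  have := hC
  rw [← Submodule.Quotient.mk_eq_zero]
  refine SeparatingDual.eq_zero_of_forall_dual_eq_zero (R := ℂ) fun g => ?_
  refine h (g.comp C.mkQL) fun y hy => ?_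
  have h0 : C.mkQL y = 0 := (Submodule.Quotient.mk_eq_zero C).2 hy
  rw [ContinuousLinearMap.comp_apply, h0, map_zero]

open Metric in

/-- If `A` is a commutative Banach algebra, `χ` a character of `A`, `u ∈ A` with
`χ u ≠ 0`, and the multiplication operator `ρ_u : v ↦ v * u` is weakly compact with
adjoint mapping a weak-star dense subset `D` of `A*` into a norm-closed subspace `C`
of `A*`, then `χ ∈ C`. -/
theorem stmt4 {A : Type*} [NormedCommRing A] [NormedAlgebra ℂ A] [CompleteSpace A]
    (χ : A →L[ℂ] ℂ) (hχ0 : χ ≠ 0) (hχm : ∀ a b : A, χ (a * b) = χ a * χ b)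
    (u : A) (hu : χ u ≠ 0)
    (C : Submodule ℂ (A →L[ℂ] ℂ)) (hC : IsClosed (C : Set (A →L[ℂ] ℂ)))
    (D : Set (A →L[ℂ] ℂ))
    (hD : closure (show Set (WeakDual ℂ A) from D) = Set.univ)
    (hwc : IsCompact (closure (toWeakSpace ℂ A ''
      ((ContinuousLinearMap.mul ℂ A).flip u '' closedBall (0 : A) 1))))
    (hTD : ∀ φ ∈ D, φ.comp ((ContinuousLinearMap.mul ℂ A).flip u) ∈ C) :
    χ ∈ C := by
  refine mem_of_forall_dual_eq_zero C hC χ fun Ψ hΨC => ?_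
  obtain ⟨a, ha⟩ := exists_bidual_eq_eval _ hwc Ψ
  have hzero (φ : WeakDual ℂ A) : φ a = 0 := by
    have hcl : IsClosed {φ : WeakDual ℂ A | φ a = 0} :=
      isClosed_singleton.preimage (WeakDual.eval_continuous a)
    refine closure_minimal (s := show Set (WeakDual ℂ A) from D) (fun φ hφ => ?_) hcl
      (hD ▸ Set.mem_univ φ)
    exact (ha φ).symm.trans (hΨC _ (hTD φ hφ))
  have hχu : χ.comp ((ContinuousLinearMap.mul ℂ A).flip u) = χ u • χ := by
    ext v
    simp [hχm]
  have h : χ u * Ψ χ = 0 := by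
    rw [← smul_eq_mul, ← map_smul, ← hχu, ha]
    exact hzero χ
  exact (mul_eq_zero.1 h).resolve_left hu
end

section
/- Let H be a discrete topological space and let I be a subalgebra of C₀(H, ℂ). If there exists e ∈ I such that e·f = f for all f ∈ I, then I is finite-dimensional as a ℂ-vector space. -/
/-!
The identity `e` of `I` is idempotent, so it takes only the values `0` and `1`. As `e` vanishes at
infinity on a discrete space, it equals `1` at only finitely many points. Every `f ∈ I` satisfies
`f = e * f`, hence vanishes off the finite set `{x | e x = 1}`, so restriction to this set is a
linear injection of `I` into a finite-dimensional space.
-/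

/-- A subalgebra of `C₀(H, ℂ)` on a discrete space `H` possessing an identity element
is finite dimensional. -/
theorem stmt6 {H : Type*} [TopologicalSpace H] [DiscreteTopology H]
    (I : NonUnitalSubalgebra ℂ (ZeroAtInftyContinuousMap H ℂ))
    (h : ∃ e ∈ I, ∀ f ∈ I, e * f = f) :
    FiniteDimensional ℂ I := by
  obtain ⟨e, he, h⟩ := h
  have hval (x : H) : e x = 0 ∨ e x = 1 := by
    have hx : e x * e x = e x := DFunLike.congr_fun (h e he) x
    by_cases h0 : e x = 0
    · exact Or.inl h0
    · exact Or.inr (mul_left_cancel₀ h0 (by rw [hx, mul_one]))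
  have hfin : {x | e x = 1}.Finite := by
    have ht := e.zero_at_infty'
    rw [Filter.cocompact_eq_cofinite] at ht
    have hne : ∀ᶠ x in Filter.cofinite, e x ≠ 1 := ht.eventually_ne zero_ne_one
    simpa [Filter.eventually_cofinite] using hne
  have : Finite {x | e x = 1} := hfin
  let L : I →ₗ[ℂ] ({x | e x = 1} → ℂ) :=
    { toFun := fun f x => f.1 x.1
      map_add' := fun _ _ => rfl
      map_smul' := fun _ _ => rfl }
  refine FiniteDimensional.of_injective L fun f g hfg => ?_
  ext x
  rcases hval x with hx | hx
  · rw [← h f.1 f.2, ← h g.1 g.2]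
    simp [hx]
  · exact congrFun hfg ⟨x, hx⟩
end

section
/- Let E be a Banach space over ℂ, let X = E* be its dual, and let □ : X × X → X be a bounded bilinear map (there is a constant K with ‖m□n‖ ≤ K‖m‖‖n‖). Define Z = {m ∈ X : the map n ↦ m□n is continuous from X with the weak* topology to X with the weak* topology}, and assume Z is dense in X for the weak* topology. If T : X → X is a linear map that is weak*-weak* continuous, weakly compact as an operator on the Banach space X, and satisfies T(m□n) = T(m)□n for all m, n ∈ X, then T(m) ∈ Z for every m ∈ X. -/
/-!
The heart of the matter is Gantmacher's theorem: a weak-star continuous, weakly compact operator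
`T` on `E*` is continuous from the weak-star topology to the weak topology, that is, `f ∘ T` is
evaluation at a point of `E` for every `f ∈ E**` (`comp_eq_eval_of_weaklyCompact`). Indeed, on the
weakly compact closure of `T(ball)` the weak and weak-star topologies agree, so `f ∘ T` is weak-star
continuous on the unit ball, and a linear functional which is weak-star continuous on the ball is
an evaluation (`exists_eval_of_continuousWithinAt`, proved by Hahn–Banach and the norm closedness
of `E` in `E**`).

The center `Z` is a norm closed subspace of `E*`, again because `E` is norm closed in `E**`, and
`T` maps `Z` into itself because `T m □ n = T (m □ n)`. If `T m ∉ Z`, some `f ∈ E**` vanishes on `Z`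
but not at `T m`. Then `f ∘ T` is weak-star continuous and vanishes on the weak-star dense set `Z`,
so it is zero, a contradiction.
-/

open Metric

/-- The left topological center of a bilinear product `□` on the dual `X = E*` of a
Banach space: elements `m` for which `n ↦ m □ n` is weak-star–weak-star continuous. -/
def topCenter {E : Type*} [NormedAddCommGroup E] [NormedSpace ℂ E]
    (sq : (E →L[ℂ] ℂ) →ₗ[ℂ] (E →L[ℂ] ℂ) →ₗ[ℂ] (E →L[ℂ] ℂ)) :
    Set (E →L[ℂ] ℂ) :=
  {m | Continuous (fun n : WeakDual ℂ E => (show WeakDual ℂ E from sq m n))}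

section Evaluations

variable {E : Type*} [NormedAddCommGroup E] [NormedSpace ℂ E]

/-- The canonical image of a Banach space in its bidual is norm closed: a functional on `E*` that is
approximated by evaluations, uniformly on the unit ball, is an evaluation. -/
lemma exists_eval_of_approx [CompleteSpace E] (φ : (E →L[ℂ] ℂ) →ₗ[ℂ] ℂ)
    (h : ∀ ε : ℝ, 0 < ε → ∃ e : E, ∀ m : E →L[ℂ] ℂ, ‖φ m - m e‖ ≤ ε * ‖m‖) :
    ∃ e : E, ∀ m : E →L[ℂ] ℂ, φ m = m e := by
  obtain ⟨e₁, he₁⟩ := h 1 one_pos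
  let J := NormedSpace.inclusionInDoubleDualLi (E := E) ℂ
  -- Being at finite distance from an evaluation, `φ` is bounded.
  let Φ : (E →L[ℂ] ℂ) →L[ℂ] ℂ := φ.mkContinuous (1 + ‖e₁‖) (fun m => by
    have h1 := he₁ m
    have h2 := m.le_opNorm e₁
    have h3 : ‖φ m‖ ≤ ‖φ m - m e₁‖ + ‖m e₁‖ := by
      simpa using norm_add_le (φ m - m e₁) (m e₁)
    nlinarith)
  have hcl : IsClosed (Set.range J) :=
    J.isometry.isUniformInducing.isComplete_range.isClosed
  have hmem : Φ ∈ closure (Set.range J) := by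
    refine (Metric.mem_closure_iff (α := StrongDual ℂ (StrongDual ℂ E))).2 fun ε hε => ?_
    obtain ⟨e, he⟩ := h (ε / 2) (half_pos hε)
    have hlt : ‖Φ - J e‖ < ε :=
      (ContinuousLinearMap.opNorm_le_bound _ (half_pos hε).le fun m => he m).trans_lt
        (half_lt_self hε)
    exact ⟨J e, ⟨e, rfl⟩, (dist_eq_norm Φ (J e)).trans_lt hlt⟩
  rw [hcl.closure_eq] at hmem
  obtain ⟨e, he⟩ := hmem
  refine ⟨e, fun m => ?_⟩
  exact (DFunLike.congr_fun he m).symm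

/-- A linear functional on `E*` whose restriction to the unit ball is weak-star continuous at the
origin is evaluation at a point of `E`. -/
lemma exists_eval_of_continuousWithinAt [CompleteSpace E] (φ : (E →L[ℂ] ℂ) →ₗ[ℂ] ℂ)
    (h : ContinuousWithinAt (fun n : WeakDual ℂ E => φ (WeakDual.toStrongDual n))
      {n | ‖WeakDual.toStrongDual n‖ ≤ 1} 0) :
    ∃ e : E, ∀ m : E →L[ℂ] ℂ, φ m = m e := by
  refine exists_eval_of_approx φ fun ε hε => ?_
  have h1 := h (Metric.ball_mem_nhds _ hε)
  rw [Filter.mem_map, mem_nhdsWithin_iff_exists_mem_nhds_inter] at h1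
  obtain ⟨u, hu, hsub⟩ := h1
  obtain ⟨s, r, hr, hball⟩ := ((WeakDual.withSeminorms (𝕜 := ℂ) (E := E)).mem_nhds_iff 0 u).1 hu
  let L : s → (E →L[ℂ] ℂ) →ₗ[ℂ] ℂ := fun i =>
    (NormedSpace.inclusionInDoubleDual ℂ E (i : E)).toLinearMap
  let N : Submodule ℂ (E →L[ℂ] ℂ) := ⨅ i, LinearMap.ker (L i)
  -- The finite-codimensional subspace `N` lies in the basic neighbourhood `u`, so `|φ| ≤ ε` on
  -- its unit ball.
  have hN1 : ∀ m ∈ N, ‖m‖ ≤ 1 → ‖φ m‖ < ε := by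
    intro m hm hm1
    have : StrongDual.toWeakDual m ∈ u ∩ {n | ‖WeakDual.toStrongDual n‖ ≤ 1} := by
      refine ⟨hball ?_, hm1⟩
      rw [Seminorm.mem_ball, sub_zero]
      refine Seminorm.finset_sup_apply_lt hr fun i hi => ?_
      have hz : m i = 0 := by
        have := (Submodule.mem_iInf _).1 hm ⟨i, hi⟩
        simpa [L] using this
      rw [WeakDual.seminormFamily_apply]
      simpa [hz] using hr
    simpa using hsub this
  have hN : ∀ m ∈ N, ‖φ m‖ ≤ ε * ‖m‖ := by
    intro m hm
    rcases eq_or_ne m 0 with rfl | hm0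
    · simp
    have hpos : 0 < ‖m‖ := norm_pos_iff.2 hm0
    have := hN1 (((‖m‖⁻¹ : ℝ) : ℂ) • m) (N.smul_mem _ hm) (by
      rw [norm_smul]; simp [hpos.ne'])
    rw [map_smul, norm_smul] at this
    simp only [Complex.norm_real, norm_inv, norm_norm] at this
    rw [inv_mul_lt_iff₀ hpos] at this
    linarith
  let ψ := LinearMap.mkContinuous (φ.comp N.subtype : N →ₗ[ℂ] ℂ) ε (fun x : N => hN x.1 x.2)
  obtain ⟨g, hg, hgn⟩ := exists_extension_norm_eq N ψ
  have hgε : ‖g‖ ≤ ε := hgn.trans_le (LinearMap.mkContinuous_norm_le _ hε.le _)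
  have hspan : φ - g.toLinearMap ∈ Submodule.span ℂ (Set.range L) := by
    refine mem_span_of_iInf_ker_le_ker fun m hm => ?_
    have : g m = φ m := hg ⟨m, hm⟩
    simp [this]
  obtain ⟨e, he⟩ : ∃ e : E, ∀ m : E →L[ℂ] ℂ, (φ - g.toLinearMap) m = m e := by
    have hle : Submodule.span ℂ (Set.range L) ≤ LinearMap.range
        ((ContinuousLinearMap.coeLM ℂ).comp
          (NormedSpace.inclusionInDoubleDual ℂ E).toLinearMap) := by
      rw [Submodule.span_le]
      rintro _ ⟨i, rfl⟩
      exact ⟨i, rfl⟩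
    obtain ⟨e, he⟩ := hle hspan
    exact ⟨e, fun m => (LinearMap.congr_fun he m).symm⟩
  refine ⟨e, fun m => ?_⟩
  have hgm : φ m - m e = g m := by
    rw [← he m]; simp
  rw [hgm]
  exact (g.le_opNorm m).trans (by gcongr)

/-- **Gantmacher's theorem**, in the direction needed here: if `T` is weak-star continuous and
weakly compact on `E*`, then `f ∘ T` is evaluation at a point of `E` for each `f ∈ E**`. -/
lemma comp_eq_eval_of_weaklyCompact [CompleteSpace E]
    (T : (E →L[ℂ] ℂ) →ₗ[ℂ] (E →L[ℂ] ℂ))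
    (hTcont : Continuous (fun n : WeakDual ℂ E => (show WeakDual ℂ E from T n)))
    (hTwc : IsCompact (closure
      (toWeakSpace ℂ (E →L[ℂ] ℂ) '' (T '' closedBall (0 : E →L[ℂ] ℂ) 1))))
    (f : (E →L[ℂ] ℂ) →L[ℂ] ℂ) :
    ∃ e : E, ∀ m : E →L[ℂ] ℂ, f (T m) = m e := by
  refine exists_eval_of_continuousWithinAt (f.toLinearMap.comp T) ?_
  set K := closure (toWeakSpace ℂ (E →L[ℂ] ℂ) '' (T '' closedBall (0 : E →L[ℂ] ℂ) 1)) with hK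
  let B : Set (WeakDual ℂ E) := {n | ‖WeakDual.toStrongDual n‖ ≤ 1}
  have : CompactSpace K := isCompact_iff_compactSpace.1 hTwc
  let j : K → WeakDual ℂ E := fun k =>
    StrongDual.toWeakDual ((toWeakSpace ℂ (E →L[ℂ] ℂ)).symm k.1)
  have hjc : Continuous j := by
    refine WeakDual.continuous_of_continuous_eval fun e => ?_
    exact (WeakBilin.eval_continuous (topDualPairing ℂ (E →L[ℂ] ℂ)).flip
      (NormedSpace.inclusionInDoubleDual ℂ E e)).comp continuous_subtype_val
  have hji : Function.Injective j := fun a b hab =>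
    Subtype.ext ((toWeakSpace ℂ (E →L[ℂ] ℂ)).symm.injective (StrongDual.toWeakDual.injective hab))
  -- On the weakly compact set `K`, the weak topology coincides with the weak-star one.
  have hje : Topology.IsClosedEmbedding j := hjc.isClosedEmbedding hji
  let T' : B → K := fun n => ⟨toWeakSpace ℂ (E →L[ℂ] ℂ) (T (WeakDual.toStrongDual n.1)),
    subset_closure ⟨_, ⟨_, mem_closedBall_zero_iff.2 n.2, rfl⟩, rfl⟩⟩
  have hT' : Continuous T' :=
    hje.isInducing.continuous_iff.2 (hTcont.comp continuous_subtype_val)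
  have hf : Continuous fun n : B => f (T (WeakDual.toStrongDual n.1)) :=
    (WeakBilin.eval_continuous (topDualPairing ℂ (E →L[ℂ] ℂ)).flip f).comp
      (continuous_subtype_val.comp hT')
  exact (continuousOn_iff_continuous_domRestrict.2 hf) 0 (by simp)

lemma mem_topCenter_iff [CompleteSpace E]
    (sq : (E →L[ℂ] ℂ) →ₗ[ℂ] (E →L[ℂ] ℂ) →ₗ[ℂ] (E →L[ℂ] ℂ)) (m : E →L[ℂ] ℂ) :
    m ∈ topCenter sq ↔ ∀ x : E, ∃ e : E, ∀ n : E →L[ℂ] ℂ, sq m n x = n e := by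
  constructor
  · intro hm x
    have hc : Continuous fun n : WeakDual ℂ E => (sq m (WeakDual.toStrongDual n)) x :=
      (WeakDual.eval_continuous x).comp hm
    exact exists_eval_of_continuousWithinAt
      ((NormedSpace.inclusionInDoubleDual ℂ E x).toLinearMap.comp (sq m)) hc.continuousWithinAt
  · intro h
    refine WeakDual.continuous_of_continuous_eval fun x => ?_
    obtain ⟨e, he⟩ := h x
    exact (WeakDual.eval_continuous e).congr fun n => (he n).symm

/-- The left topological center, as a linear subspace of `E*`. -/
def topCenterSubmodule [CompleteSpace E]
    (sq : (E →L[ℂ] ℂ) →ₗ[ℂ] (E →L[ℂ] ℂ) →ₗ[ℂ] (E →L[ℂ] ℂ)) : Submodule ℂ (E →L[ℂ] ℂ) where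
  carrier := topCenter sq
  zero_mem' := (mem_topCenter_iff sq 0).2 fun x => ⟨0, fun n => by simp⟩
  add_mem' := by
    intro a b ha hb
    rw [mem_topCenter_iff] at ha hb ⊢
    intro x
    obtain ⟨e, he⟩ := ha x
    obtain ⟨e', he'⟩ := hb x
    exact ⟨e + e', fun n => by simp [he, he']⟩
  smul_mem' := by
    intro c a ha
    rw [mem_topCenter_iff] at ha ⊢
    intro x
    obtain ⟨e, he⟩ := ha x
    exact ⟨c • e, fun n => by simp [he]⟩

lemma isClosed_topCenter [CompleteSpace E]
    (sq : (E →L[ℂ] ℂ) →ₗ[ℂ] (E →L[ℂ] ℂ) →ₗ[ℂ] (E →L[ℂ] ℂ))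
    (hbdd : ∃ K : ℝ, ∀ m n : E →L[ℂ] ℂ, ‖sq m n‖ ≤ K * ‖m‖ * ‖n‖) :
    IsClosed (topCenter sq) := by
  obtain ⟨K, hK⟩ := hbdd
  refine isClosed_of_closure_subset fun m hm => (mem_topCenter_iff sq m).2 fun x => ?_
  refine exists_eval_of_approx
    ((NormedSpace.inclusionInDoubleDual ℂ E x).toLinearMap.comp (sq m)) fun ε hε => ?_
  -- `K` may be negative, hence the absolute value; the summand `1` keeps `C` positive.
  set C := |K| * ‖x‖ + 1 with hC
  have hCpos : 0 < C := by positivity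
  obtain ⟨m', hm', hd⟩ := Metric.mem_closure_iff.1 hm (ε / C) (by positivity)
  obtain ⟨e, he⟩ := (mem_topCenter_iff sq m').1 hm' x
  refine ⟨e, fun n => ?_⟩
  rw [dist_eq_norm, lt_div_iff₀ hCpos] at hd
  have h1 : sq m n x - n e = sq (m - m') n x := by simp [he]
  calc ‖sq m n x - n e‖ = ‖sq (m - m') n x‖ := by rw [h1]
    _ ≤ ‖sq (m - m') n‖ * ‖x‖ := ContinuousLinearMap.le_opNorm _ _
    _ ≤ (|K| * ‖m - m'‖ * ‖n‖) * ‖x‖ := by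
        gcongr
        refine (hK _ _).trans ?_
        gcongr
        exact le_abs_self K
    _ = (‖m - m'‖ * (|K| * ‖x‖)) * ‖n‖ := by ring
    _ ≤ ε * ‖n‖ := by
        gcongr
        refine le_trans ?_ hd.le
        gcongr
        linarith

end Evaluations

/-- If `□` is a bounded bilinear product on the dual `X = E*` of a Banach space whose
left topological center `Z` is weak-star dense in `X`, then any weak-star–weak-star
continuous, weakly compact left multiplier `T` of `□` maps all of `X` into `Z`. -/
theorem stmt9 {E : Type*} [NormedAddCommGroup E] [NormedSpace ℂ E] [CompleteSpace E]
    (sq : (E →L[ℂ] ℂ) →ₗ[ℂ] (E →L[ℂ] ℂ) →ₗ[ℂ] (E →L[ℂ] ℂ))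
    (hbdd : ∃ K : ℝ, ∀ m n : E →L[ℂ] ℂ, ‖sq m n‖ ≤ K * ‖m‖ * ‖n‖)
    (hdense : closure (show Set (WeakDual ℂ E) from topCenter sq) = Set.univ)
    (T : (E →L[ℂ] ℂ) →ₗ[ℂ] (E →L[ℂ] ℂ))
    (hTcont : Continuous (fun n : WeakDual ℂ E => (show WeakDual ℂ E from T n)))
    (hTwc : IsCompact (closure
      (toWeakSpace ℂ (E →L[ℂ] ℂ) '' (T '' closedBall (0 : E →L[ℂ] ℂ) 1))))
    (hTmul : ∀ m n : E →L[ℂ] ℂ, T (sq m n) = sq (T m) n) :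
    ∀ m : E →L[ℂ] ℂ, T m ∈ topCenter sq := by
  intro m
  by_contra hm
  let Z := topCenterSubmodule sq
  have hZ : IsClosed (Z : Set (E →L[ℂ] ℂ)) := isClosed_topCenter sq hbdd
  -- A functional vanishing on `Z` but not at `T m` comes from the normed quotient `E* / Z`.
  obtain ⟨f, hfZ, hfm⟩ : ∃ f : (E →L[ℂ] ℂ) →L[ℂ] ℂ, (∀ z ∈ Z, f z = 0) ∧ f (T m) ≠ 0 := by
    have hne : Z.mkQL (T m) ≠ 0 := by
      rw [Submodule.mkQL_apply, Submodule.mkQ_apply, Ne, Submodule.Quotient.mk_eq_zero]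
      exact hm
    have : IsClosed (Z : Set (E →L[ℂ] ℂ)) := hZ
    have hne' : ‖Z.mkQL (T m)‖ ≠ 0 :=
      (@norm_ne_zero_iff _ (Submodule.Quotient.normedAddCommGroup Z).toNormedAddGroup _).2 hne
    obtain ⟨g, -, hg'⟩ := exists_dual_vector ℂ (Z.mkQL (T m)) hne'
    have hg : g (Z.mkQL (T m)) ≠ 0 := by
      rw [hg']
      exact RCLike.ofReal_ne_zero.2 hne'
    refine ⟨g.comp Z.mkQL, fun z hz => ?_, hg⟩
    have : Z.mkQL z = 0 := by
      rw [Submodule.mkQL_apply, Submodule.mkQ_apply, Submodule.Quotient.mk_eq_zero]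
      exact hz
    simp [ContinuousLinearMap.comp_apply, this]
  obtain ⟨e, he⟩ := comp_eq_eval_of_weaklyCompact T hTcont hTwc f
  have hTZ : ∀ z ∈ topCenter sq, T z ∈ topCenter sq := by
    intro z hz
    have h : Continuous fun n : WeakDual ℂ E => (show WeakDual ℂ E from T (sq z n)) :=
      hTcont.comp hz
    exact h.congr fun n => hTmul z n
  have hsub : closure (show Set (WeakDual ℂ E) from topCenter sq) ⊆ {n | n e = 0} := by
    refine closure_minimal (fun z hz => ?_)
      (isClosed_singleton.preimage (WeakDual.eval_continuous e))
    exact (he z).symm.trans (hfZ _ (hTZ z hz))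
  have hme : StrongDual.toWeakDual m ∈ {n : WeakDual ℂ E | n e = 0} :=
    hsub (hdense ▸ Set.mem_univ _)
  exact hfm ((he m).trans hme)
end
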